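/- arXiv:2603.03200 — 12 statements merged into one kernel-verified Lean document; each statement's English description precedes it below -/
import Mathlib

section
/- Let A be a countable set and X ⊆ A^ℕ a one-sided shift space. Then (X, σ, d_prod) has the shadowing property if and only if X is a shift of finite order, i.e. there exists p ≥ 1 such that membership in X is determined by allowed blocks of length p. -/
/-- The left shift on `A^ℕ`. -/
def shiftSeq {A : Type*} (x : ℕ → A) : ℕ → A := fun n => x (n + 1)

open Classical in
/-- The standard product ultrametric `d_prod(x,y) = 2^{-N(x,y)}` on `A^ℕ`. -/
noncomputable def dProd {A : Type*} (x y : ℕ → A) : ℝ :=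
  if x = y then 0 else (1 / 2 : ℝ) ^ sInf {n : ℕ | x n ≠ y n}

/-- A `δ`-pseudo-orbit lying in `X` for the map `σ`, with respect to `d`. -/
def IsPseudoOrbitOn {Y : Type*} (d : Y → Y → ℝ) (σ : Y → Y) (X : Set Y)
    (δ : ℝ) (xs : ℕ → Y) : Prop :=
  ∀ n : ℕ, xs n ∈ X ∧ d (σ (xs n)) (xs (n + 1)) < δ

/-- The shadowing property for `σ` restricted to `X`, with respect to `d`. -/
def HasShadowingOn {Y : Type*} (d : Y → Y → ℝ) (σ : Y → Y) (X : Set Y) : Prop :=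
  ∀ ε > (0:ℝ), ∃ δ > (0:ℝ), ∀ xs : ℕ → Y, IsPseudoOrbitOn d σ X δ xs →
    ∃ x ∈ X, ∀ i : ℕ, d (σ^[i] x) (xs i) < ε

/-- `X` is a shift of finite order `p`: if every length-`p` block of `x` occurs
(at some position) in some element of `X`, then `x ∈ X`. -/
def IsShiftOfOrder {A : Type*} (X : Set (ℕ → A)) (p : ℕ) : Prop :=
  ∀ x : ℕ → A,
    (∀ i : ℕ, ∃ y ∈ X, ∃ j : ℕ, ∀ t < p, x (i + t) = y (j + t)) → x ∈ X

theorem dProd_lt_iff {A : Type*} (x y : ℕ → A) (k : ℕ) :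
    dProd x y < (1 / 2 : ℝ) ^ k ↔ ∀ n ≤ k, x n = y n := by
  unfold dProd
  split_ifs with h
  · subst h
    simp
  · have hne : {n : ℕ | x n ≠ y n}.Nonempty := by
      by_contra hc
      rw [Set.not_nonempty_iff_eq_empty] at hc
      apply h
      funext n
      by_contra hn
      have : n ∈ {n : ℕ | x n ≠ y n} := hn
      rw [hc] at this
      exact this
    rw [pow_lt_pow_iff_right_of_lt_one₀ (by norm_num) (by norm_num)]
    constructor
    · intro hk n hn
      by_contra hc
      have := Nat.sInf_le (s := {n : ℕ | x n ≠ y n}) hc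
      omega
    · intro hk
      by_contra hc
      exact Nat.sInf_mem hne (hk _ (not_lt.mp hc))

theorem shiftSeq_iter {A : Type*} (x : ℕ → A) (i t : ℕ) :
    (shiftSeq^[i] x) t = x (i + t) := by
  induction i generalizing t with
  | zero => simp
  | succ i ih =>
    rw [Function.iterate_succ_apply']
    show (shiftSeq^[i] x) (t + 1) = _
    rw [ih]
    congr 1
    omega

/-- For a one-sided shift space over a countable alphabet, shadowing with respect to
the standard product ultrametric is equivalent to being a shift of finite order. -/
theorem shadowing_iff_finite_order {A : Type*} [Countable A] (X : Set (ℕ → A))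
    (hne : X.Nonempty)
    (hcl : @IsClosed (ℕ → A) (@Pi.topologicalSpace ℕ (fun _ => A) (fun _ => ⊥)) X)
    (hinv : ∀ x ∈ X, shiftSeq x ∈ X) :
    HasShadowingOn dProd shiftSeq X ↔ ∃ p : ℕ, 1 ≤ p ∧ IsShiftOfOrder X p := by
  have hit : ∀ x ∈ X, ∀ i, shiftSeq^[i] x ∈ X := by
    intro x hx i
    induction i with
    | zero => simpa using hx
    | succ i ih =>
      rw [Function.iterate_succ_apply']
      exact hinv _ ih
  constructor
  · intro hs
    obtain ⟨δ, hδ, H⟩ := hs 1 one_pos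
    obtain ⟨k, hk⟩ := exists_pow_lt_of_lt_one hδ (by norm_num : (1 / 2 : ℝ) < 1)
    refine ⟨k + 2, by omega, ?_⟩
    intro x hx
    choose y hy j hj using hx
    obtain ⟨z, hz, hzs⟩ := H (fun i => shiftSeq^[j i] (y i)) (by
      intro n
      refine ⟨hit _ (hy n) _, lt_trans ?_ hk⟩
      rw [dProd_lt_iff]
      intro t ht
      show (shiftSeq^[j n] (y n)) (t + 1) = (shiftSeq^[j (n + 1)] (y (n + 1))) t
      rw [shiftSeq_iter, shiftSeq_iter, ← hj n (t + 1) (by omega),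
        ← hj (n + 1) t (by omega)]
      congr 1
      omega)
    have : x = z := by
      funext i
      have h1 := hzs i
      rw [← pow_zero (1 / 2 : ℝ), dProd_lt_iff] at h1
      have h2 := h1 0 le_rfl
      rw [shiftSeq_iter, shiftSeq_iter, ← hj i 0 (by omega)] at h2
      simpa using h2.symm
    rw [this]
    exact hz
  · rintro ⟨p, hp, H⟩ ε hε
    obtain ⟨k, hk⟩ := exists_pow_lt_of_lt_one hε (by norm_num : (1 / 2 : ℝ) < 1)
    refine ⟨(1 / 2 : ℝ) ^ (k + p), by positivity, ?_⟩
    intro xs hxs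
    have key : ∀ t ≤ k + p, ∀ i, xs i t = xs (i + t) 0 := by
      intro t
      induction t with
      | zero => intro _ i; rfl
      | succ t ih =>
        intro ht i
        have h1 := (dProd_lt_iff _ _ _).1 (hxs i).2 t (by omega)
        have h2 : xs i (t + 1) = xs (i + 1) t := h1
        rw [h2, ih (by omega)]
        congr 1
        omega
    refine ⟨fun i => xs i 0, ?_, ?_⟩
    · apply H
      intro i
      refine ⟨xs i, (hxs i).1, 0, ?_⟩
      intro t ht
      rw [zero_add]
      exact (key t (by omega) i).symm
    · intro i
      refine lt_trans ?_ hk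
      rw [dProd_lt_iff]
      intro t ht
      rw [shiftSeq_iter]
      exact (key t (by omega) i).symm
end

section
/- Let A be a countable set and X ⊆ A^ℕ a one-sided shift space which is a shift of finite order p. Let d be a metric on X inducing the product topology, and suppose there exists C ≥ 1 such that α_n ≤ C·η_{n+p} for all n ≥ 0. Then (X, σ, d) has the Lipschitz shadowing property with Lipschitz constant L = C; in fact, for every real δ with 0 < δ ≤ η_p, every δ-pseudo-orbit (x^m) admits z ∈ X with d(σ^m(z), x^m) ≤ Cδ for all m ≥ 0. -/
open scoped ENNReal

/-- `x` and `y` agree on their first `n` coordinates, i.e. `(x,y) ∈ U_n`. -/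
def BlockEq {A : Type*} (n : ℕ) (x y : ℕ → A) : Prop := ∀ k < n, x k = y k

/-- `d` is a metric on the subset `X`. -/
def IsMetricOn {Y : Type*} (X : Set Y) (d : Y → Y → ℝ) : Prop :=
  (∀ x ∈ X, ∀ y ∈ X, (d x y = 0 ↔ x = y)) ∧
  (∀ x ∈ X, ∀ y ∈ X, d x y = d y x) ∧
  (∀ x ∈ X, ∀ y ∈ X, ∀ z ∈ X, d x z ≤ d x y + d y z)

/-- `α_n = sup { d(x,y) : (x,y) ∈ U_n }`, as an element of `[0,∞]`. -/
noncomputable def alphaN {A : Type*} (X : Set (ℕ → A))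
    (d : (ℕ → A) → (ℕ → A) → ℝ) (n : ℕ) : ℝ≥0∞ :=
  sSup {t : ℝ≥0∞ | ∃ x ∈ X, ∃ y ∈ X, BlockEq n x y ∧ t = ENNReal.ofReal (d x y)}

/-- `η_n = sup { η > 0 : d(x,y) < η ⇒ (x,y) ∈ U_n }`, as an element of `[0,∞]`. -/
noncomputable def etaN {A : Type*} (X : Set (ℕ → A))
    (d : (ℕ → A) → (ℕ → A) → ℝ) (n : ℕ) : ℝ≥0∞ :=
  sSup {t : ℝ≥0∞ | ∃ η : ℝ, 0 < η ∧
    (∀ x ∈ X, ∀ y ∈ X, d x y < η → BlockEq n x y) ∧ t = ENNReal.ofReal η}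

/-- `d` induces the product topology on `X` (the alphabet being discrete, the
cylinders `{y : y agrees with x on the first m coordinates}` form a neighborhood
basis at each point for the product topology). -/
def InducesProductTopologyOn {A : Type*} (X : Set (ℕ → A))
    (d : (ℕ → A) → (ℕ → A) → ℝ) : Prop :=
  (∀ x ∈ X, ∀ ε > (0:ℝ), ∃ m : ℕ, ∀ y ∈ X, BlockEq m x y → d x y < ε) ∧
  (∀ x ∈ X, ∀ m : ℕ, ∃ ε > (0:ℝ), ∀ y ∈ X, d x y < ε → BlockEq m x y)

theorem aux_iter {A : Type*} (z : ℕ → A) (m k : ℕ) : (shiftSeq^[m] z) k = z (m + k) := by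
  induction m generalizing z with
  | zero => simp
  | succ m ih =>
    rw [Function.iterate_succ_apply, ih]
    simp only [shiftSeq]
    congr 1
    omega

theorem aux_eta {A : Type*} {X : Set (ℕ → A)} {d : (ℕ → A) → (ℕ → A) → ℝ} {n : ℕ} {δ : ℝ}
    (hδ : 0 < δ) (h : ENNReal.ofReal δ ≤ etaN X d n) {x y : ℕ → A} (hx : x ∈ X) (hy : y ∈ X)
    (hd : d x y < δ) : BlockEq n x y := by
  have h1 : ENNReal.ofReal (d x y) < etaN X d n :=
    lt_of_lt_of_le ((ENNReal.ofReal_lt_ofReal_iff hδ).2 hd) h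
  obtain ⟨t, ⟨η, hη, hb, rfl⟩, hlt⟩ := lt_sSup_iff.1 h1
  exact hb x hx y hy ((ENNReal.ofReal_lt_ofReal_iff hη).1 hlt)

theorem aux_agree {A : Type*} {xs : ℕ → ℕ → A} {N : ℕ}
    (h : ∀ m, BlockEq N (shiftSeq (xs m)) (xs (m + 1))) :
    ∀ k ≤ N, ∀ m, xs m k = xs (m + k) 0 := by
  intro k
  induction k with
  | zero => intro _ m; rfl
  | succ k ih =>
    intro hk m
    have h1 : xs m (k + 1) = xs (m + 1) k := h m k (by omega)
    rw [h1, ih (by omega)]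
    congr 1
    omega

theorem aux_main {A : Type*} (X : Set (ℕ → A))
    (hinv : ∀ x ∈ X, shiftSeq x ∈ X)
    (p : ℕ) (horder : IsShiftOfOrder X p)
    (d : (ℕ → A) → (ℕ → A) → ℝ)
    (hmet : IsMetricOn X d)
    (C : ℝ) (hC : 1 ≤ C)
    (hcond : ∀ n : ℕ, alphaN X d n ≤ ENNReal.ofReal C * etaN X d (n + p)) 
    (δ : ℝ) (hδ : 0 < δ) (hle : ENNReal.ofReal δ ≤ etaN X d p)
    (xs : ℕ → (ℕ → A)) (hxs : IsPseudoOrbitOn d shiftSeq X δ xs) :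
    ∃ z ∈ X, ∀ m : ℕ, d (shiftSeq^[m] z) (xs m) ≤ C * δ := by
  have key : ∀ n, ENNReal.ofReal δ ≤ etaN X d n → ∀ k ≤ n, ∀ m, xs m k = xs (m + k) 0 :=
    fun n hn => aux_agree fun m =>
      aux_eta hδ hn (hinv _ (hxs m).1) (hxs (m + 1)).1 (hxs m).2
  have hz : (fun i => xs i 0) ∈ X := by
    apply horder
    intro i
    refine ⟨xs i, (hxs i).1, 0, fun t ht => ?_⟩
    rw [Nat.zero_add]
    exact (key p hle t ht.le i).symm
  have hzm : ∀ m, shiftSeq^[m] (fun i => xs i 0) ∈ X := by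
    intro m
    induction m with
    | zero => exact hz
    | succ m ih => rw [Function.iterate_succ_apply']; exact hinv _ ih
  refine ⟨_, hz, fun m => ?_⟩
  by_cases hall : ∀ n, ENNReal.ofReal δ ≤ etaN X d (n + p)
  · have : shiftSeq^[m] (fun i => xs i 0) = xs m := by
      funext k
      rw [aux_iter]
      exact (key _ (hall k) k (by omega) m).symm
    rw [(hmet.1 _ (hzm m) _ (hxs m).1).2 this]
    positivity
  · push Not at hall
    classical
    have hs := Nat.find_spec hall
    have hm := fun {j} => @Nat.find_min _ _ hall j
    generalize Nat.find hall = n at hs hm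
    rcases n with _ | n
    · rw [Nat.zero_add] at hs
      exact absurd hle (not_le.2 hs)
    · have h1 := not_lt.1 (hm (Nat.lt_succ_self n))
      have hb : BlockEq (n + 1) (shiftSeq^[m] (fun i => xs i 0)) (xs m) := by
        intro k hk
        rw [aux_iter]
        exact (key _ h1 k (by omega) m).symm
      have h2 : ENNReal.ofReal (d (shiftSeq^[m] (fun i => xs i 0)) (xs m)) ≤ alphaN X d (n + 1) :=
        le_sSup ⟨_, hzm m, _, (hxs m).1, hb, rfl⟩
      have h3 := (h2.trans (hcond (n + 1))).trans (mul_le_mul_right hs.le (ENNReal.ofReal C))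
      rw [← ENNReal.ofReal_mul (by linarith)] at h3
      exact (ENNReal.ofReal_le_ofReal_iff (by positivity)).1 h3

/-- If `X` is a shift of finite order `p` and the compatible metric `d` satisfies
`α_n ≤ C·η_{n+p}` for all `n`, then `(X,σ,d)` has Lipschitz shadowing with
constant `L = C`; in fact every `δ`-pseudo-orbit with `0 < δ ≤ η_p` is
`Cδ`-shadowed. -/
theorem lipschitz_shadowing_of_alpha_le_eta {A : Type*} [Countable A]
    (X : Set (ℕ → A)) (hne : X.Nonempty)
    (hcl : @IsClosed (ℕ → A) (@Pi.topologicalSpace ℕ (fun _ => A) (fun _ => ⊥)) X)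
    (hinv : ∀ x ∈ X, shiftSeq x ∈ X)
    (p : ℕ) (hp : 1 ≤ p) (horder : IsShiftOfOrder X p)
    (d : (ℕ → A) → (ℕ → A) → ℝ)
    (hmet : IsMetricOn X d) (htop : InducesProductTopologyOn X d)
    (C : ℝ) (hC : 1 ≤ C)
    (hcond : ∀ n : ℕ, alphaN X d n ≤ ENNReal.ofReal C * etaN X d (n + p)) :
    (∀ δ : ℝ, 0 < δ → ENNReal.ofReal δ ≤ etaN X d p →
      ∀ xs : ℕ → (ℕ → A), IsPseudoOrbitOn d shiftSeq X δ xs →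
        ∃ z ∈ X, ∀ m : ℕ, d (shiftSeq^[m] z) (xs m) ≤ C * δ) ∧
    (∃ δ₀ > (0:ℝ), ∀ δ : ℝ, 0 < δ → δ ≤ δ₀ →
      ∀ xs : ℕ → (ℕ → A), IsPseudoOrbitOn d shiftSeq X δ xs →
        ∃ z ∈ X, ∀ m : ℕ, d (shiftSeq^[m] z) (xs m) ≤ C * δ) := by
  have main := aux_main X hinv p horder d hmet C hC hcond
  refine ⟨main, ?_⟩
  have hpos : etaN X d p ≠ 0 := by
    intro h0
    have ha := hcond 0
    rw [Nat.zero_add, h0, mul_zero] at ha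
    have hsub : ∀ x ∈ X, ∀ y ∈ X, d x y < 1 → BlockEq p x y := by
      intro x hx y hy _
      have h1 : ∀ x ∈ X, ∀ y ∈ X, d x y ≤ 0 := by
        intro x hx y hy
        have h0 : ENNReal.ofReal (d x y) ≤ alphaN X d 0 :=
          le_sSup ⟨x, hx, y, hy, fun k hk => absurd hk (Nat.not_lt_zero k), rfl⟩
        exact ENNReal.ofReal_eq_zero.1 (le_antisymm (h0.trans ha) zero_le)
      have h2 := hmet.2.2 x hx y hy x hx
      rw [(hmet.1 x hx x hx).2 rfl] at h2
      have h3 := h1 x hx y hy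
      have h4 := h1 y hy x hx
      have h5 := (hmet.1 x hx y hy).1 (by linarith)
      intro k _
      rw [h5]
    have h6 : ENNReal.ofReal 1 ≤ etaN X d p := le_sSup ⟨1, one_pos, hsub, rfl⟩
    rw [h0] at h6
    simp at h6
  have hmin : min (etaN X d p) 1 ≠ ⊤ := ne_top_of_le_ne_top ENNReal.one_ne_top (min_le_right _ _)
  refine ⟨(min (etaN X d p) 1).toReal, ENNReal.toReal_pos ?_ hmin, fun δ hδ hle => main δ hδ ?_⟩
  · exact (lt_min (pos_iff_ne_zero.2 hpos) one_pos).ne'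
  · exact (ENNReal.ofReal_le_of_le_toReal hle).trans (min_le_left _ _)
end

section
/- Let A be a countable set, X ⊆ A^ℕ a one-sided shift space, and d any prefix ultrametric on X (for example the standard product ultrametric d_prod). Then (X, σ, d) has the shadowing property if and only if it has the Lipschitz shadowing property. Moreover, if shadowing holds, then Lipschitz shadowing holds with Lipschitz constant L = 1. -/
/-- Lipschitz shadowing on `X` with explicit constants `L` and `δ₀`. -/
def HasLipschitzShadowingOnWith {Y : Type*} (d : Y → Y → ℝ) (σ : Y → Y) (X : Set Y)
    (L δ₀ : ℝ) : Prop :=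
  ∀ δ : ℝ, 0 < δ → δ ≤ δ₀ → ∀ xs : ℕ → Y, IsPseudoOrbitOn d σ X δ xs →
    ∃ x ∈ X, ∀ n : ℕ, d (σ^[n] x) (xs n) ≤ L * δ

/-- The Lipschitz shadowing property for `σ` restricted to `X`. -/
def HasLipschitzShadowingOn {Y : Type*} (d : Y → Y → ℝ) (σ : Y → Y) (X : Set Y) : Prop :=
  ∃ L > (0:ℝ), ∃ δ₀ > (0:ℝ), HasLipschitzShadowingOnWith d σ X L δ₀

/-- For a one-sided shift space `X ⊆ A^ℕ` with a prefix ultrametric `d`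
(determined by a strictly decreasing null sequence `(r_n)` of positive reals),
shadowing and Lipschitz shadowing coincide, and when shadowing holds, Lipschitz
shadowing holds with Lipschitz constant `L = 1`. -/
theorem prefix_ultrametric_shadowing_iff_lipschitz {A : Type*} [Countable A]
    (X : Set (ℕ → A)) (hne : X.Nonempty)
    (hcl : @IsClosed (ℕ → A) (@Pi.topologicalSpace ℕ (fun _ => A) (fun _ => ⊥)) X)
    (hinv : ∀ x ∈ X, shiftSeq x ∈ X)
    (d : (ℕ → A) → (ℕ → A) → ℝ) (r : ℕ → ℝ)
    (hr_anti : StrictAnti r) (hr_pos : ∀ n : ℕ, 0 < r n)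
    (hr_lim : Filter.Tendsto r Filter.atTop (nhds 0))
    (hd_diag : ∀ x ∈ X, d x x = 0)
    (hd_off : ∀ x ∈ X, ∀ y ∈ X, x ≠ y → d x y = r (sInf {n : ℕ | x n ≠ y n})) :
    (HasShadowingOn d shiftSeq X ↔ HasLipschitzShadowingOn d shiftSeq X) ∧
    (HasShadowingOn d shiftSeq X →
      ∃ δ₀ > (0:ℝ), HasLipschitzShadowingOnWith d shiftSeq X 1 δ₀) := by
  have lemA : ∀ x ∈ X, ∀ y ∈ X, ∀ k, d x y < r k → x k = y k := by
    intro x hx y hy k h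
    by_contra hne'
    have hxy : x ≠ y := fun h => hne' (by rw [h])
    rw [hd_off x hx y hy hxy] at h
    have h1 : sInf {n : ℕ | x n ≠ y n} ≤ k := Nat.sInf_le hne'
    exact absurd (hr_anti.antitone h1) (not_le.mpr h)
  have lemB : ∀ x ∈ X, ∀ y ∈ X, ∀ m, (∀ j < m, x j = y j) → d x y ≤ r m := by
    intro x hx y hy m h
    by_cases hxy : x = y
    · subst hxy
      rw [hd_diag x hx]
      exact (hr_pos m).le
    · rw [hd_off x hx y hy hxy]
      apply hr_anti.antitone
      have hn : {n : ℕ | x n ≠ y n}.Nonempty := Function.ne_iff.mp hxy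
      have h2 : x (sInf {n : ℕ | x n ≠ y n}) ≠ y (sInf {n : ℕ | x n ≠ y n}) := Nat.sInf_mem hn
      by_contra hlt
      exact h2 (h _ (not_le.mp hlt))
  have hit : ∀ (n : ℕ) (x : ℕ → A) (j : ℕ), (shiftSeq^[n] x) j = x (n + j) := by
    intro n
    induction n with
    | zero => intro x j; simp
    | succ n ih =>
      intro x j
      rw [Function.iterate_succ_apply, ih]
      show x (n + j + 1) = _
      congr 1
      omega
  have hitX : ∀ (n : ℕ), ∀ x ∈ X, shiftSeq^[n] x ∈ X := by
    intro n
    induction n with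
    | zero => intro x hx; simpa using hx
    | succ n ih =>
      intro x hx
      rw [Function.iterate_succ_apply]
      exact ih _ (hinv x hx)
  have main : HasShadowingOn d shiftSeq X →
      ∃ δ₀ > (0:ℝ), HasLipschitzShadowingOnWith d shiftSeq X 1 δ₀ := by
    intro hs
    obtain ⟨δ₁, hδ₁, H⟩ := hs (r 0) (hr_pos 0)
    refine ⟨δ₁, hδ₁, ?_⟩
    intro δ hδ hle xs hxs
    obtain ⟨x, hx, hsh⟩ := H xs (fun n => ⟨(hxs n).1, (hxs n).2.trans_le hle⟩)
    refine ⟨x, hx, fun n => ?_⟩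
    have hex : ∃ m, r m < δ := (hr_lim.eventually (gt_mem_nhds hδ)).exists
    classical
    have hm := Nat.find_spec hex
    have hmin : ∀ j < Nat.find hex, δ ≤ r j := fun j hj => not_lt.mp (Nat.find_min hex hj)
    have key : ∀ j, j ≤ Nat.find hex → ∀ n, xs n j = xs (n + j) 0 := by
      intro j
      induction j with
      | zero => intro _ n; rfl
      | succ j ih =>
        intro hj n
        have h1 := lemA _ (hinv _ (hxs n).1) _ (hxs (n+1)).1 j
          ((hxs n).2.trans_le (hmin j (by omega)))
        have h2 := ih (by omega) (n+1)
        have h3 : n + (j + 1) = n + 1 + j := by omega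
        rw [h3, ← h2]
        exact h1
    have h0 : ∀ i, x i = xs i 0 := by
      intro i
      have := lemA _ (hitX i x hx) _ (hxs i).1 0 (hsh i)
      rwa [hit] at this
    have := lemB _ (hitX n x hx) _ (hxs n).1 (Nat.find hex) (fun j hj => by
      rw [hit, h0, key j hj.le n])
    linarith
  refine ⟨⟨fun h => ?_, ?_⟩, main⟩
  · obtain ⟨δ₀, h0, h1⟩ := main h
    exact ⟨1, one_pos, δ₀, h0, h1⟩
  · rintro ⟨L, hL, δ₀, hδ₀, H⟩ ε hε
    have hp : 0 < min δ₀ (ε / (2 * L)) := lt_min hδ₀ (by positivity)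
    refine ⟨_, hp, fun xs hxs => ?_⟩
    obtain ⟨x, hx, h⟩ := H _ hp (min_le_left _ _) xs hxs
    refine ⟨x, hx, fun i => (h i).trans_lt ?_⟩
    have h1 : L * min δ₀ (ε / (2 * L)) ≤ L * (ε / (2 * L)) :=
      mul_le_mul_of_nonneg_left (min_le_right _ _) hL.le
    have h2 : L * (ε / (2 * L)) = ε / 2 := by field_simp
    linarith
end

section
/- Let A be a countably infinite set. For every enumeration P of Σ_A^fin, the function d_P is an ultrametric on Σ_A: d_P(x,y) = 0 if and only if x = y, d_P(x,y) = d_P(y,x) for all x,y, and d_P(x,y) ≤ max{d_P(x,z), d_P(z,y)} for all x, y, z ∈ Σ_A. -/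
/-- The Ott–Tomforde–Willis full shift `Σ_A = A^ℕ ⊔ Σ_A^fin`: infinite words are
functions `ℕ → A`, finite words (including the empty word `[]`) are lists. -/
abbrev OTWFullShift (A : Type*) := (ℕ → A) ⊕ List A

/-- `u ⪯ x`: the finite word `u` is an initial segment of `x ∈ Σ_A`. -/
def OTWPre {A : Type*} (u : List A) : OTWFullShift A → Prop
  | Sum.inl f => ∀ i : Fin u.length, u.get i = f i
  | Sum.inr v => u <+: v

/-- The shift map on `Σ_A`: delete the first symbol (finite words of length `≤ 1`
are sent to the empty word). -/
def otwShift {A : Type*} : OTWFullShift A → OTWFullShift A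
  | Sum.inl f => Sum.inl fun n => f (n + 1)
  | Sum.inr v => Sum.inr v.tail

/-- The Deaconu–Renault domain `D = Σ_A ∖ {∅}`. -/
def otwDomain (A : Type*) : Set (OTWFullShift A) := {x | x ≠ Sum.inr []}

/-- `P` is an enumeration of `Σ_A^fin` indexed by `{1, 2, 3, …}`:
`j ↦ P j` is a bijection from `{1, 2, …}` onto the finite words
(the value `P 0` is irrelevant). -/
def IsEnumeration {A : Type*} (P : ℕ → List A) : Prop :=
  Function.Bijective fun k : ℕ => P (k + 1)

open Classical in
/-- The OTW metric attached to the enumeration `P`: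
`d_P(x,y) = 2^{-i}` where `i = min{j ≥ 1 : exactly one of P j ⪯ x, P j ⪯ y}`. -/
noncomputable def otwDist {A : Type*} (P : ℕ → List A) (x y : OTWFullShift A) : ℝ :=
  if x = y then 0
  else (1 / 2 : ℝ) ^ sInf {j : ℕ | 1 ≤ j ∧ Xor' (OTWPre (P j) x) (OTWPre (P j) y)}

theorem OTWPre_ext {A : Type*} (x y : OTWFullShift A)
    (h : ∀ u : List A, OTWPre u x ↔ OTWPre u y) : x = y := by
  have key : ∀ (f : ℕ → A) (n : ℕ), OTWPre (List.ofFn fun i : Fin n => f i) (Sum.inl f) := by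
    intro f n i
    simp
  have nolen : ∀ (f : ℕ → A) (v : List A),
      ¬ ∀ u : List A, OTWPre u (Sum.inl f) ↔ OTWPre u (Sum.inr v) := by
    intro f v h
    have h1 : (List.ofFn fun i : Fin (v.length + 1) => f i) <+: v := (h _).1 (key f _)
    have := h1.length_le
    simp at this
  rcases x with f | v <;> rcases y with g | w
  · congr 1
    funext n
    have h1 := (h _).1 (key f (n + 1))
    have h2 := h1 ⟨n, by simp⟩
    simpa only [List.get_ofFn, Fin.val_cast] using h2
  · exact (nolen f w h).elim
  · exact (nolen g v fun u => (h u).symm).elim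
  · have h1 : v <+: w := (h v).1 (List.prefix_refl v)
    have h2 : w <+: v := (h w).2 (List.prefix_refl w)
    rw [h1.eq_of_length (le_antisymm h1.length_le h2.length_le)]

theorem otw_sep {A : Type*} (P : ℕ → List A) (hP : IsEnumeration P)
    (x y : OTWFullShift A) (h : x ≠ y) :
    {j : ℕ | 1 ≤ j ∧ Xor' (OTWPre (P j) x) (OTWPre (P j) y)}.Nonempty := by
  by_contra hn
  apply h
  apply OTWPre_ext
  intro u
  obtain ⟨k, hk⟩ := hP.2 u
  by_contra hu
  apply hn
  refine ⟨k + 1, by omega, ?_⟩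
  simp only at hk
  rw [hk]
  unfold Xor'
  tauto

/-- For every enumeration `P` of the finite words, `d_P` is an ultrametric on the
OTW full shift `Σ_A`. -/
theorem otwDist_is_ultrametric {A : Type*} [Countable A] [Infinite A]
    (P : ℕ → List A) (hP : IsEnumeration P) :
    (∀ x y : OTWFullShift A, otwDist P x y = 0 ↔ x = y) ∧
    (∀ x y : OTWFullShift A, otwDist P x y = otwDist P y x) ∧
    (∀ x y z : OTWFullShift A,
      otwDist P x y ≤ max (otwDist P x z) (otwDist P z y)) := by
  refine ⟨fun x y => ?_, fun x y => ?_, fun x y z => ?_⟩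
  · unfold otwDist
    split_ifs with h <;> simp [h]
  · unfold otwDist
    have hs : {j : ℕ | 1 ≤ j ∧ Xor' (OTWPre (P j) x) (OTWPre (P j) y)} =
        {j : ℕ | 1 ≤ j ∧ Xor' (OTWPre (P j) y) (OTWPre (P j) x)} := by
      ext j
      simp only [Set.mem_setOf_eq, Xor', Xor]
      tauto
    rw [hs]
    by_cases h : x = y
    · rw [if_pos h, if_pos h.symm]
    · rw [if_neg h, if_neg (Ne.symm h)]
  · by_cases hxy : x = y
    · subst hxy
      unfold otwDist
      rw [if_pos rfl]
      apply le_max_of_le_left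
      split_ifs
      · exact le_rfl
      · positivity
    by_cases hxz : x = z
    · subst hxz
      exact le_max_right _ _
    by_cases hzy : z = y
    · subst hzy
      exact le_max_left _ _
    obtain ⟨h1, h2⟩ := Nat.sInf_mem (otw_sep P hP x y hxy)
    unfold otwDist
    rw [if_neg hxy, if_neg hxz, if_neg hzy]
    set i := sInf {j : ℕ | 1 ≤ j ∧ Xor' (OTWPre (P j) x) (OTWPre (P j) y)}
    by_cases hz : Xor' (OTWPre (P i) x) (OTWPre (P i) z)
    · apply le_max_of_le_left
      exact pow_le_pow_of_le_one (by norm_num) (by norm_num) (Nat.sInf_le ⟨h1, hz⟩)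
    · apply le_max_of_le_right
      refine pow_le_pow_of_le_one (by norm_num) (by norm_num) (Nat.sInf_le ⟨h1, ?_⟩)
      simp only [Xor', Xor] at h2 hz ⊢
      tauto
end

section
/- Let A be a countably infinite set. If P and Q are two enumerations of Σ_A^fin, then the OTW metrics d_P and d_Q on Σ_A are uniformly equivalent: both identity maps id : (Σ_A, d_P) → (Σ_A, d_Q) and id : (Σ_A, d_Q) → (Σ_A, d_P) are uniformly continuous. -/
theorem otw_ofFn_pre {A : Type*} (f : ℕ → A) (n : ℕ) :
    OTWPre (List.ofFn fun i : Fin n => f i) (Sum.inl f) := by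
  intro i
  simp

theorem otw_exists_sep {A : Type*} (x y : OTWFullShift A) (h : x ≠ y) :
    ∃ u : List A, Xor' (OTWPre u x) (OTWPre u y) := by
  have key : ∀ (f : ℕ → A) (v : List A),
      ¬ OTWPre (List.ofFn fun i : Fin (v.length + 1) => f i) (Sum.inr v) := by
    intro f v hp
    have := List.IsPrefix.length_le hp
    simp at this
  rcases x with f | v <;> rcases y with g | w
  · have hfg : f ≠ g := fun e => h (by rw [e])
    obtain ⟨n, hn⟩ := Function.ne_iff.mp hfg
    refine ⟨List.ofFn fun i : Fin (n + 1) => f i, Or.inl ⟨otw_ofFn_pre f _, ?_⟩⟩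
    intro hp
    have h1 := hp ⟨n, by simp⟩
    have h2 := otw_ofFn_pre f (n + 1) ⟨n, by simp⟩
    exact hn (h2.symm.trans h1)
  · exact ⟨_, Or.inl ⟨otw_ofFn_pre f _, key f w⟩⟩
  · exact ⟨_, Or.inr ⟨otw_ofFn_pre g _, key g v⟩⟩
  · by_cases hvw : v <+: w
    · refine ⟨w, Or.inr ⟨List.prefix_refl w, ?_⟩⟩
      intro hwv
      exact h (by rw [hvw.eq_of_length_le (List.IsPrefix.length_le hwv)])
    · exact ⟨v, Or.inl ⟨List.prefix_refl v, hvw⟩⟩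

theorem otw_one_dir {A : Type*} (P Q : ℕ → List A) (hP : IsEnumeration P)
    (hQ : IsEnumeration Q) :
    ∀ ε > (0:ℝ), ∃ δ > (0:ℝ), ∀ x y : OTWFullShift A,
      otwDist P x y < δ → otwDist Q x y < ε := by
  intro ε hε
  obtain ⟨N, hN⟩ := exists_pow_lt_of_lt_one hε (by norm_num : (1 / 2 : ℝ) < 1)
  choose m hm using fun k : ℕ => hP.2 (Q k)
  refine ⟨(1 / 2) ^ ((Finset.range (N + 1)).sup m + 1), by positivity, ?_⟩
  intro x y hd
  unfold otwDist at hd ⊢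
  split_ifs at hd ⊢ with hxy
  · exact hε
  have h1 := (pow_lt_pow_iff_right_of_lt_one₀ (by norm_num : (0:ℝ) < 1 / 2)
    (by norm_num : (1 / 2 : ℝ) < 1)).mp hd
  have hne : {j : ℕ | 1 ≤ j ∧ Xor' (OTWPre (Q j) x) (OTWPre (Q j) y)}.Nonempty := by
    obtain ⟨u, hu⟩ := otw_exists_sep x y hxy
    obtain ⟨k, hk⟩ := hQ.2 u
    refine ⟨k + 1, by omega, ?_⟩
    simp only at hk
    rw [hk]; exact hu
  have hmem := Nat.sInf_mem hne
  set s := sInf {j : ℕ | 1 ≤ j ∧ Xor' (OTWPre (Q j) x) (OTWPre (Q j) y)} with hs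
  have hlt : N ≤ s := by
    by_contra hlt
    have hle : m s ≤ (Finset.range (N + 1)).sup m :=
      Finset.le_sup (f := m) (Finset.mem_range.mpr (by omega))
    have hk := hm s
    simp only at hk
    have : sInf {j : ℕ | 1 ≤ j ∧ Xor' (OTWPre (P j) x) (OTWPre (P j) y)} ≤ m s + 1 := by
      apply Nat.sInf_le
      refine ⟨by omega, ?_⟩
      rw [hk]; exact hmem.2
    omega
  exact (pow_le_pow_of_le_one (by norm_num) (by norm_num) hlt).trans_lt hN

/-- The OTW metrics attached to any two enumerations are uniformly equivalent:
both identity maps are uniformly continuous. -/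
theorem otwDist_uniformly_equivalent {A : Type*} [Countable A] [Infinite A]
    (P Q : ℕ → List A) (hP : IsEnumeration P) (hQ : IsEnumeration Q) :
    (∀ ε > (0:ℝ), ∃ δ > (0:ℝ), ∀ x y : OTWFullShift A,
      otwDist P x y < δ → otwDist Q x y < ε) ∧
    (∀ ε > (0:ℝ), ∃ δ > (0:ℝ), ∀ x y : OTWFullShift A,
      otwDist Q x y < δ → otwDist P x y < ε) := by
  exact ⟨otw_one_dir P Q hP hQ, otw_one_dir Q P hQ hP⟩
end

section
/- Let A be a countably infinite set. For every enumeration P of Σ_A^fin, the Ott–Tomforde–Willis full shift (Σ_A, σ) with domain D = Σ_A ∖ {∅} has the shadowing property with respect to the OTW metric d_P. -/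
/-- A `δ`-pseudo-orbit for the system `(Σ_A, σ, D)` with respect to `d`. -/
def IsDeltaPseudoOrbit {X : Type*} (d : X → X → ℝ) (σ : X → X) (D : Set X)
    (δ : ℝ) (xs : ℕ → X) : Prop :=
  ∀ n : ℕ, xs n ∈ D ∧ d (σ (xs n)) (xs (n + 1)) < δ

/-- The shadowing property for the system `(X, σ, D)` with respect to `d`. -/
def HasShadowing {X : Type*} (d : X → X → ℝ) (σ : X → X) (D : Set X) : Prop :=
  ∀ ε > (0:ℝ), ∃ δ > (0:ℝ), ∀ xs : ℕ → X, IsDeltaPseudoOrbit d σ D δ xs →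
    ∃ x : X, (∀ j : ℕ, σ^[j] x ∈ D) ∧ ∀ i : ℕ, d (σ^[i] x) (xs i) < ε

/-- The Lipschitz shadowing property for the system `(X, σ, D)` with respect to `d`. -/
def HasLipschitzShadowing {X : Type*} (d : X → X → ℝ) (σ : X → X) (D : Set X) : Prop :=
  ∃ L > (0:ℝ), ∃ δ₀ > (0:ℝ), ∀ δ : ℝ, 0 < δ → δ ≤ δ₀ →
    ∀ xs : ℕ → X, IsDeltaPseudoOrbit d σ D δ xs →
      ∃ x : X, (∀ j : ℕ, σ^[j] x ∈ D) ∧ ∀ n : ℕ, d (σ^[n] x) (xs n) ≤ L * δ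

theorem otwPre_nil {A : Type*} (x : OTWFullShift A) : OTWPre [] x := by
  cases x with
  | inl f => intro i; exact i.elim0
  | inr v => exact List.nil_prefix

theorem otwPre_inl_cons {A : Type*} (f : ℕ → A) (b : A) (v : List A) :
    OTWPre (b :: v) (Sum.inl f) ↔ b = f 0 ∧ OTWPre v (Sum.inl fun n => f (n + 1)) := by
  constructor
  · intro h
    refine ⟨h ⟨0, by simp⟩, fun i => ?_⟩
    have := h i.succ
    simpa using this
  · rintro ⟨h0, h⟩ i
    refine Fin.cases ?_ (fun i => ?_) i
    · simpa using h0
    · simpa using h i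

theorem otwPre_cons {A : Type*} (x : OTWFullShift A) (hx : x ∈ otwDomain A) :
    ∃ a, ∀ b v, OTWPre (b :: v) x ↔ b = a ∧ OTWPre v (otwShift x) := by
  cases x with
  | inl f => exact ⟨f 0, fun b v => otwPre_inl_cons f b v⟩
  | inr w =>
    cases w with
    | nil => exact absurd rfl hx
    | cons a w => exact ⟨a, fun b v => List.cons_prefix_cons⟩

theorem otwPre_map {A : Type*} (f : ℕ → A) (n : ℕ) :
    OTWPre ((List.range n).map f) (Sum.inl f) := by
  intro i
  simp

theorem otwPre_ext {A : Type*} (x y : OTWFullShift A)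
    (h : ∀ u, OTWPre u x ↔ OTWPre u y) : x = y := by
  have key : ∀ (f : ℕ → A) (v : List A),
      ¬ ∀ u, OTWPre u (Sum.inl f) ↔ OTWPre u (Sum.inr v) := by
    intro f v h
    have h1 : (List.range (v.length + 1)).map f <+: v := (h _).1 (otwPre_map f _)
    have := h1.length_le
    simp at this
  cases x with
  | inl f =>
    cases y with
    | inl g =>
      congr 1
      funext n
      have h1 := (h _).1 (otwPre_map f (n + 1)) ⟨n, by simp⟩
      simpa using h1
    | inr v => exact absurd h (key f v)
  | inr w =>
    cases y with
    | inl g => exact absurd (fun u => (h u).symm) (key g w)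
    | inr v =>
      have h1 : w <+: v := (h w).1 List.prefix_rfl
      have h2 : v <+: w := (h v).2 List.prefix_rfl
      rw [h1.eq_of_length_le h2.length_le]

theorem otwDist_agree {A : Type*} (P : ℕ → List A) (x y : OTWFullShift A) (M : ℕ)
    (h : otwDist P x y < (1 / 2 : ℝ) ^ M) (j : ℕ) (h1 : 1 ≤ j) (hj : j ≤ M) :
    OTWPre (P j) x ↔ OTWPre (P j) y := by
  by_cases hxy : x = y
  · rw [hxy]
  rw [otwDist, if_neg hxy] at h
  have h2 := (pow_lt_pow_iff_right_of_lt_one₀ (by norm_num) (by norm_num)).1 h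
  by_contra hc
  have hm : j ∈ {j : ℕ | 1 ≤ j ∧ Xor' (OTWPre (P j) x) (OTWPre (P j) y)} :=
    ⟨h1, (xor_iff_not_iff _ _).2 hc⟩
  have := Nat.sInf_le hm
  omega

theorem otwDist_lt {A : Type*} (P : ℕ → List A) (hP : IsEnumeration P)
    (x y : OTWFullShift A) (N : ℕ)
    (h : ∀ j, 1 ≤ j → j ≤ N → (OTWPre (P j) x ↔ OTWPre (P j) y)) :
    otwDist P x y < (1 / 2 : ℝ) ^ N := by
  by_cases hxy : x = y
  · rw [otwDist, if_pos hxy]; positivity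
  rw [otwDist, if_neg hxy]
  apply (pow_lt_pow_iff_right_of_lt_one₀ (by norm_num) (by norm_num)).2
  have hne : {j : ℕ | 1 ≤ j ∧ Xor' (OTWPre (P j) x) (OTWPre (P j) y)}.Nonempty := by
    by_contra hc
    apply hxy
    apply otwPre_ext
    intro u
    obtain ⟨k, rfl⟩ := hP.2 u
    by_contra hk
    exact hc ⟨k + 1, by omega, (xor_iff_not_iff _ _).2 hk⟩
  obtain ⟨h1, h2⟩ := Nat.sInf_mem hne
  by_contra hc
  exact (xor_iff_not_iff _ _).1 h2 (h _ h1 (by omega))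

theorem otwShift_iterate_inl {A : Type*} (f : ℕ → A) (n : ℕ) :
    otwShift^[n] (Sum.inl f) = Sum.inl fun k => f (n + k) := by
  induction n with
  | zero => simp
  | succ n ih =>
    rw [Function.iterate_succ_apply', ih]
    simp only [otwShift]
    congr 1
    funext k
    congr 1
    omega

/-- For every enumeration `P`, the OTW full shift with Deaconu–Renault domain
`D = Σ_A ∖ {∅}` has the shadowing property with respect to `d_P`. -/
theorem otw_full_shift_shadowing {A : Type*} [Countable A] [Infinite A]
    (P : ℕ → List A) (hP : IsEnumeration P) :
    HasShadowing (otwDist P) otwShift (otwDomain A) := by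
  intro ε hε
  obtain ⟨N, hN⟩ := exists_pow_lt_of_lt_one hε (by norm_num : (1 / 2 : ℝ) < 1)
  have hfin : {u : List A | ∃ j ∈ Set.Iic N, u ∈ (P j).tails}.Finite := by
    have : {u : List A | ∃ j ∈ Set.Iic N, u ∈ (P j).tails}
        = ⋃ j ∈ Set.Iic N, {u | u ∈ (P j).tails} := by
      ext u; simp
    rw [this]
    exact (Set.finite_Iic N).biUnion fun j _ => List.finite_toSet _
  choose idx hidx using hP.2
  obtain ⟨M, hM⟩ := (hfin.image idx).bddAbove
  refine ⟨(1 / 2 : ℝ) ^ (M + 1), by positivity, fun xs hxs => ?_⟩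
  choose a ha using fun n => otwPre_cons (xs n) (hxs n).1
  have main : ∀ j ≤ N, ∀ u : List A, u <:+ P j → ∀ n,
      (OTWPre u (Sum.inl fun k => a (n + k)) ↔ OTWPre u (xs n)) := by
    intro j hj u
    induction u with
    | nil => intro _ n; simp [otwPre_nil]
    | cons b v ih =>
      intro hu n
      have hv : v <:+ P j := (List.suffix_cons b v).trans hu
      have hi : idx v ≤ M := hM ⟨v, ⟨j, hj, by simpa using hv⟩, rfl⟩
      have hag := otwDist_agree P _ _ _ (hxs n).2 (idx v + 1) (by omega) (by omega)
      have e : P (idx v + 1) = v := hidx v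
      rw [e] at hag
      rw [ha, hag, ← ih hv (n + 1), otwPre_inl_cons]
      have : (fun k => a (n + (k + 1))) = fun k => a (n + 1 + k) := by
        funext k; congr 1; omega
      rw [this]
      simp
  refine ⟨Sum.inl a, fun j => ?_, fun i => ?_⟩
  · rw [otwShift_iterate_inl]; simp [otwDomain]
  · rw [otwShift_iterate_inl]
    exact (otwDist_lt P hP _ _ N fun j _ hj => main j hj _ List.suffix_rfl i).trans hN
end

section
/- Let A be a countably infinite set. There exist a strictly increasing sequence i_1 < i_2 < ⋯ of positive integers and an enumeration Q = {q_k}_{k≥1} of Σ_A^fin such that for each n ≥ 1 there exist pairwise distinct letters a_1^{(n)}, a_2^{(n)}, a_3^{(n)}, b^{(n)} ∈ A with: (i) i_n > n and q_{i_n − n} = a_1^{(n)} a_2^{(n)} a_3^{(n)}; (ii) no word among q_1, …, q_{i_n} starts with a_2^{(n)}; (iii) the letter b^{(n)} does not occur in any word among q_1, …, q_{i_n}. -/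
theorem bad_step {A : Type*} [Infinite A] (n : ℕ) (L₀ : List (List A)) (w : List A)
    (h₀ : L₀.Nodup) : ∃ L' : List (List A), L₀ <+: L' ∧ L'.Nodup ∧ w ∈ L' ∧
      L₀.length < L'.length ∧ n < L'.length ∧ ∃ a₁ a₂ a₃ b : A,
        a₁ ≠ a₂ ∧ a₁ ≠ a₃ ∧ a₁ ≠ b ∧ a₂ ≠ a₃ ∧ a₂ ≠ b ∧ a₃ ≠ b ∧
        L'[L'.length - n - 1]? = some [a₁, a₂, a₃] ∧
        ∀ u ∈ L', u.head? ≠ some a₂ ∧ b ∉ u := by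
  classical
  obtain ⟨L, hp, hn, hw⟩ : ∃ L : List (List A), L₀ <+: L ∧ L.Nodup ∧ w ∈ L := by
    by_cases h : w ∈ L₀
    · exact ⟨L₀, List.prefix_rfl, h₀, h⟩
    · refine ⟨L₀ ++ [w], List.prefix_append _ _, ?_, by simp⟩
      rw [List.nodup_append]
      refine ⟨h₀, by simp, ?_⟩
      intro a ha b hb
      simp at hb
      rintro rfl
      exact h (hb ▸ ha)
  have fresh : ∀ F : Finset A, ∃ a, a ∉ F := fun F => Infinite.exists_notMem_finset F
  obtain ⟨a₁, h1⟩ := fresh L.flatten.toFinset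
  obtain ⟨a₂, h2⟩ := fresh (insert a₁ L.flatten.toFinset)
  obtain ⟨a₃, h3⟩ := fresh (insert a₂ (insert a₁ L.flatten.toFinset))
  obtain ⟨b, h4⟩ := fresh (insert a₃ (insert a₂ (insert a₁ L.flatten.toFinset)))
  obtain ⟨c, h5⟩ := fresh (insert b (insert a₃ (insert a₂ (insert a₁ L.flatten.toFinset))))
  simp only [Finset.mem_insert, List.mem_toFinset, List.mem_flatten, not_or, not_exists,
    not_and] at h1 h2 h3 h4 h5
  obtain ⟨h21, h2⟩ := h2
  obtain ⟨h32, h31, h3⟩ := h3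
  obtain ⟨h43, h42, h41, h4⟩ := h4
  obtain ⟨h54, h53, h52, h51, h5⟩ := h5
  have hlen := hp.length_le
  refine ⟨L ++ [a₁, a₂, a₃] :: (List.range n).map (fun i => List.replicate (i + 1) c),
    hp.trans (List.prefix_append _ _), ?_, by simp [hw], by simp; omega, by simp; omega,
    a₁, a₂, a₃, b, Ne.symm h21, Ne.symm h31, Ne.symm h41, Ne.symm h32, Ne.symm h42,
    Ne.symm h43, ?_, ?_⟩
  · rw [List.nodup_append, List.nodup_cons]
    refine ⟨hn, ⟨?_, ?_⟩, ?_⟩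
    · intro h
      obtain ⟨i, -, hi⟩ := List.mem_map.1 h
      have : a₁ ∈ List.replicate (i + 1) c := by rw [hi]; simp
      exact h51 (List.eq_of_mem_replicate this).symm
    · refine List.Nodup.map ?_ List.nodup_range
      intro i j hij
      have := congrArg List.length hij
      simpa using this
    · rintro u hu v hv rfl
      rcases List.mem_cons.1 hv with rfl | hv
      · exact h1 _ hu (by simp)
      · obtain ⟨i, -, rfl⟩ := List.mem_map.1 hv
        exact h5 _ hu (by simp)
  · have : (L ++ [a₁, a₂, a₃] :: (List.range n).map
      (fun i => List.replicate (i + 1) c)).length - n - 1 = L.length := by simp; omega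
    rw [this]
    simp
  · intro u hu
    rcases List.mem_append.1 hu with hu | hu
    · exact ⟨fun h => h2 u hu (List.mem_of_head? h), h4 u hu⟩
    · rcases List.mem_cons.1 hu with rfl | hu
      · simp [h41, h42, h43, Ne.symm h21]
      · obtain ⟨i, -, rfl⟩ := List.mem_map.1 hu
        refine ⟨fun h => ?_, fun h => ?_⟩
        · exact h52 (List.eq_of_mem_replicate (List.mem_of_head? h)).symm
        · exact h54 (List.eq_of_mem_replicate h).symm

/-- There exist a strictly increasing sequence of indices `i_1 < i_2 < ⋯` and an
enumeration `Q` of the finite words such that, for each `n ≥ 1`, there are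
pairwise distinct letters `a₁, a₂, a₃, b` with: (i) `i_n > n` and
`q_{i_n - n} = a₁a₂a₃`; (ii) no word among `q_1, …, q_{i_n}` starts with `a₂`;
(iii) `b` does not occur in any word among `q_1, …, q_{i_n}`. -/
theorem exists_bad_enumeration {A : Type*} [Countable A] [Infinite A] :
    ∃ (I : ℕ → ℕ) (Q : ℕ → List A), IsEnumeration Q ∧
      (∀ n : ℕ, 1 ≤ n → I n < I (n + 1)) ∧
      (∀ n : ℕ, 1 ≤ n → ∃ a₁ a₂ a₃ b : A,
        a₁ ≠ a₂ ∧ a₁ ≠ a₃ ∧ a₁ ≠ b ∧ a₂ ≠ a₃ ∧ a₂ ≠ b ∧ a₃ ≠ b ∧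
        n < I n ∧ Q (I n - n) = [a₁, a₂, a₃] ∧
        (∀ k : ℕ, 1 ≤ k → k ≤ I n → (Q k).head? ≠ some a₂) ∧
        (∀ k : ℕ, 1 ≤ k → k ≤ I n → b ∉ Q k)) := by
  classical
  obtain ⟨e, he⟩ := exists_surjective_nat (List A)
  choose f hf using fun (n : ℕ) (L : {L : List (List A) // L.Nodup}) =>
    bad_step (n + 1) L.1 (e n) L.2
  let S : ℕ → {L : List (List A) // L.Nodup} := fun n =>
    Nat.rec ⟨[], List.nodup_nil⟩ (fun n L => ⟨f n L, (hf n L).2.1⟩) n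
  have hS : ∀ n, (S (n + 1)).1 = f n (S n) := fun n => rfl
  have hlt : ∀ n, (S n).1.length < (S (n + 1)).1.length := fun n => by
    rw [hS]; exact (hf n (S n)).2.2.2.1
  have hpre : ∀ m n, m ≤ n → (S m).1 <+: (S n).1 := by
    intro m n hmn
    induction n, hmn using Nat.le_induction with
    | base => exact List.prefix_rfl
    | succ n _ ih => exact ih.trans (by rw [hS]; exact (hf n (S n)).1)
  have hle : ∀ n, n ≤ (S n).1.length := by
    intro n
    induction n with
    | zero => simp
    | succ n ih => have := hlt n; omega
  let Q : ℕ → List A := fun k => ((S k).1[k - 1]?).getD []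
  have hQ : ∀ k m, k < (S m).1.length → (S m).1[k]? = some (Q (k + 1)) := by
    intro k m hk
    have hk' : k < (S (k + 1)).1.length := hle (k + 1)
    have key : (S m).1[k]? = (S (k + 1)).1[k]? := by
      rcases le_total m (k + 1) with h | h
      · obtain ⟨t, ht⟩ := hpre _ _ h
        rw [← ht, List.getElem?_append_left hk]
      · obtain ⟨t, ht⟩ := hpre _ _ h
        rw [← ht, List.getElem?_append_left hk']
    rw [key]
    simp [Q, List.getElem?_eq_getElem hk']
  refine ⟨fun n => (S n).1.length, Q, ⟨?_, ?_⟩, fun n _ => hlt n, ?_⟩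
  · intro i j hij
    have hij : Q (i + 1) = Q (j + 1) := hij
    have hi : i < (S (max i j + 1)).1.length := by have := hle (max i j + 1); omega
    have hj : j < (S (max i j + 1)).1.length := by have := hle (max i j + 1); omega
    have h1 := hQ i (max i j + 1) hi
    have h2 := hQ j (max i j + 1) hj
    exact (List.getElem?_inj hi (S (max i j + 1)).2).1 (by rw [h1, h2, hij])
  · intro w
    obtain ⟨n, rfl⟩ := he w
    have hm : e n ∈ (S (n + 1)).1 := by rw [hS]; exact (hf n (S n)).2.2.1
    obtain ⟨k, hk, hke⟩ := List.getElem_of_mem hm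
    refine ⟨k, ?_⟩
    have := hQ k (n + 1) hk
    rw [List.getElem?_eq_getElem hk, hke] at this
    exact (Option.some.inj this).symm
  · intro n hn
    obtain ⟨n, rfl⟩ : ∃ m, n = m + 1 := ⟨n - 1, by omega⟩
    obtain ⟨-, -, -, -, hl, a₁, a₂, a₃, b, d1, d2, d3, d4, d5, d6, hg, hu⟩ := hf n (S n)
    rw [← hS] at hl hg hu
    have hmem : ∀ k, 1 ≤ k → k ≤ (S (n + 1)).1.length → Q k ∈ (S (n + 1)).1 := by
      intro k h1 h2
      have := hQ (k - 1) (n + 1) (by omega)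
      rw [Nat.sub_add_cancel h1] at this
      exact List.mem_of_getElem? this
    refine ⟨a₁, a₂, a₃, b, d1, d2, d3, d4, d5, d6, hl, ?_, fun k h1 h2 => (hu _ (hmem k h1 h2)).1,
      fun k h1 h2 => (hu _ (hmem k h1 h2)).2⟩
    have := hQ ((S (n + 1)).1.length - (n + 1) - 1) (n + 1) (by omega)
    rw [hg, Nat.sub_add_cancel (by omega)] at this
    exact (Option.some.inj this).symm
end

section
/- Let A be a countably infinite set and let Q be an enumeration of Σ_A^fin for which there exist a strictly increasing sequence i_1 < i_2 < ⋯ of positive integers and, for each n ≥ 1, pairwise distinct letters a_1^{(n)}, a_2^{(n)}, a_3^{(n)}, b^{(n)} ∈ A such that: (i) i_n > n and q_{i_n − n} = a_1^{(n)} a_2^{(n)} a_3^{(n)}; (ii) no word among q_1, …, q_{i_n} starts with a_2^{(n)}; (iii) b^{(n)} does not occur in any word among q_1, …, q_{i_n}. Then the Ott–Tomforde–Willis full shift (Σ_A, σ) with domain D = Σ_A ∖ {∅} does NOT have the Lipschitz shadowing property with respect to the OTW metric d_Q. -/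
theorem otw_aux_pre {A : Type*} (Q : ℕ → List A) (x y : OTWFullShift A) (m : ℕ) (hm : 1 ≤ m)
    (h : otwDist Q x y < (1 / 2 : ℝ) ^ m) (hy : OTWPre (Q m) y) : OTWPre (Q m) x := by
  by_contra hx
  have hne : x ≠ y := by
    rintro rfl
    exact hx hy
  unfold otwDist at h
  rw [if_neg hne] at h
  have hle : sInf {j : ℕ | 1 ≤ j ∧ Xor' (OTWPre (Q j) x) (OTWPre (Q j) y)} ≤ m :=
    Nat.sInf_le ⟨hm, Or.inr ⟨hy, hx⟩⟩
  have := pow_le_pow_of_le_one (by norm_num : (0:ℝ) ≤ 1 / 2) (by norm_num) hle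
  linarith

theorem otw_aux_dist {A : Type*} (Q : ℕ → List A) (x y : OTWFullShift A) (N : ℕ)
    (hne : ∃ j, 1 ≤ j ∧ Xor' (OTWPre (Q j) x) (OTWPre (Q j) y))
    (h : ∀ j, 1 ≤ j → j ≤ N → (OTWPre (Q j) x ↔ OTWPre (Q j) y)) :
    otwDist Q x y < (1 / 2 : ℝ) ^ N := by
  unfold otwDist
  split_ifs with hxy
  · positivity
  · apply pow_lt_pow_right_of_lt_one₀ (by norm_num) (by norm_num)
    obtain ⟨h1, h2⟩ := Nat.sInf_mem
      (s := {j : ℕ | 1 ≤ j ∧ Xor' (OTWPre (Q j) x) (OTWPre (Q j) y)}) hne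
    by_contra hlt
    have := h _ h1 (not_lt.mp hlt)
    rcases h2 with ⟨p, q⟩ | ⟨p, q⟩
    · exact q (this.1 p)
    · exact q (this.2 p)

theorem otw_aux_cons {A : Type*} (c : A) (u : List A) (f : ℕ → A)
    (h : OTWPre (c :: u) (Sum.inl f)) : c = f 0 := h ⟨0, by simp⟩

theorem otw_aux_contra {A : Type*} (a b c : A) (hac : a ≠ c) (x : OTWFullShift A)
    (h0 : OTWPre [a, b, c] x) (h2 : OTWPre [a, b, c] (otwShift (otwShift x))) : False := by
  rcases x with f | v
  · have e1 : c = f 2 := h0 ⟨2, by simp⟩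
    have e2 : a = f 2 := h2 ⟨0, by simp⟩
    exact hac (e2.trans e1.symm)
  · obtain ⟨t, rfl⟩ := h0
    obtain ⟨s, hs⟩ := h2
    simp at hs
    exact hac hs.1

/-- If the enumeration `Q` has the structure produced in Lemma 6.1 (a strictly
increasing sequence `i_1 < i_2 < ⋯` and, for each `n ≥ 1`, pairwise distinct
letters `a₁, a₂, a₃, b` with `q_{i_n - n} = a₁a₂a₃`, no word among
`q_1, …, q_{i_n}` starting with `a₂`, and `b` not occurring in any word among
`q_1, …, q_{i_n}`), then the OTW full shift does NOT have the Lipschitz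
shadowing property with respect to `d_Q`. -/
theorem otw_lipschitz_shadowing_fails {A : Type*} [Countable A] [Infinite A]
    (Q : ℕ → List A) (hQ : IsEnumeration Q) (I : ℕ → ℕ)
    (hmono : ∀ n : ℕ, 1 ≤ n → I n < I (n + 1))
    (hstruct : ∀ n : ℕ, 1 ≤ n → ∃ a₁ a₂ a₃ b : A,
      a₁ ≠ a₂ ∧ a₁ ≠ a₃ ∧ a₁ ≠ b ∧ a₂ ≠ a₃ ∧ a₂ ≠ b ∧ a₃ ≠ b ∧
      n < I n ∧ Q (I n - n) = [a₁, a₂, a₃] ∧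
      (∀ k : ℕ, 1 ≤ k → k ≤ I n → (Q k).head? ≠ some a₂) ∧
      (∀ k : ℕ, 1 ≤ k → k ≤ I n → b ∉ Q k)) :
    ¬ HasLipschitzShadowing (otwDist Q) otwShift (otwDomain A) := by
  rintro ⟨L, hL, δ₀, hδ₀, H⟩
  obtain ⟨n, hn⟩ := exists_pow_lt_of_lt_one (lt_min hδ₀ (inv_pos.2 hL))
    (by norm_num : (1 / 2 : ℝ) < 1)
  have hn' : (1 / 2 : ℝ) ^ (n + 1) < min δ₀ L⁻¹ :=
    lt_of_le_of_lt (pow_le_pow_of_le_one (by norm_num) (by norm_num) (Nat.le_succ n)) hn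
  obtain ⟨a₁, a₂, a₃, b, -, h13, -, -, h2b, -, hI, hQI, hA, hB⟩ := hstruct (n + 1) (by omega)
  generalize hk : n + 1 = k at *
  generalize I k = N at *
  have hδ : (1 / 2 : ℝ) ^ N ≤ δ₀ :=
    (pow_le_pow_of_le_one (by norm_num) (by norm_num) hI.le).trans
      (hn'.le.trans (min_le_left _ _))
  let f : ℕ → A := fun i => if i = 0 then a₁ else if i = 1 then a₂ else a₃
  let g : ℕ → A := fun i => if i = 0 then b else f (i - 1)
  let xs : ℕ → OTWFullShift A := fun i => match i with
    | 0 => Sum.inl f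
    | 1 => Sum.inl g
    | j + 2 => Sum.inl fun i => f (i + j)
  have hps : IsDeltaPseudoOrbit (otwDist Q) otwShift (otwDomain A) ((1 / 2 : ℝ) ^ N) xs := by
    intro i
    refine ⟨?_, ?_⟩
    · rcases i with _ | _ | i <;> simp [xs, otwDomain]
    · rcases i with _ | i
      · apply otw_aux_dist
        · obtain ⟨j, hj⟩ := hQ.2 [a₂]
          refine ⟨j + 1, by omega, Or.inl ⟨?_, ?_⟩⟩
          · simp only at hj
            rw [hj]
            intro i
            have : i = ⟨0, by simp⟩ := Subsingleton.elim (α := Fin 1) _ _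
            subst this
            simp [f]
          · simp only at hj
            rw [hj]
            intro h
            exact h2b (otw_aux_cons _ _ _ h)
        · intro j h1 h2
          have hA' := hA j h1 h2
          have hB' := hB j h1 h2
          rcases hq : Q j with _ | ⟨c, u⟩
          · exact ⟨fun _ i => i.elim0, fun _ i => i.elim0⟩
          · rw [hq] at hA' hB'
            constructor
            · intro h
              exact absurd (by simpa [f] using otw_aux_cons _ _ _ h) (by simpa using hA')
            · intro h
              have e : c = b := otw_aux_cons _ _ _ h
              exact absurd (by simp [e]) hB'
      · have : otwShift (xs (i + 1)) = xs (i + 1 + 1) := by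
          rcases i with _ | i
          · simp [xs, otwShift, g]
          · simp only [xs, otwShift]
            congr 1
            funext t
            congr 1
            omega
        unfold otwDist
        rw [if_pos this]
        positivity
  obtain ⟨x, -, hx⟩ := H _ (by positivity) hδ xs hps
  have hlt : L * (1 / 2 : ℝ) ^ N < (1 / 2 : ℝ) ^ (N - k) := by
    have e : (1 / 2 : ℝ) ^ N = (1 / 2 : ℝ) ^ (N - k) * (1 / 2 : ℝ) ^ k := by
      rw [← pow_add]
      congr 1
      omega
    have hp : (0 : ℝ) < (1 / 2 : ℝ) ^ (N - k) := by positivity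
    have h1 : L * (1 / 2 : ℝ) ^ k < 1 := by
      have := mul_lt_mul_of_pos_left (hn'.trans_le (min_le_right _ _)) hL
      rwa [mul_inv_cancel₀ hL.ne'] at this
    rw [e]
    nlinarith
  have hf : OTWPre (Q (N - k)) (Sum.inl f) := by
    rw [hQI]
    intro i
    change Fin 3 at i
    fin_cases i <;> simp [f]
  have p0 := otw_aux_pre Q _ _ (N - k) (by omega) ((hx 0).trans_lt hlt) hf
  have p2 := otw_aux_pre Q _ _ (N - k) (by omega) ((hx 2).trans_lt hlt) hf
  rw [hQI] at p0 p2
  exact otw_aux_contra a₁ a₂ a₃ h13 x p0 p2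
end

section
/- Let A be a countably infinite set, Q an enumeration of Σ_A^fin, i ≥ 1 an index, and a_1, a_2, a_3, b ∈ A pairwise distinct letters such that no word among q_1, …, q_i starts with a_2 and b does not occur in any word among q_1, …, q_i. Define infinite words x^{2k} := a_1 a_2 a_3 b b b ⋯ and x^{2k+1} := b a_1 a_2 a_3 b b b ⋯ for all k ≥ 0. Then d_Q(σ(x^m), x^{m+1}) < 2^{-i} for all m ≥ 0; that is, (x^m)_{m≥0} is a 2^{-i}-pseudo-orbit for (Σ_A, σ, d_Q). -/
/-- The infinite word `a₁ a₂ a₃ b b b ⋯`. -/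
def wordEven {A : Type*} (a₁ a₂ a₃ b : A) : OTWFullShift A :=
  Sum.inl fun t => if t = 0 then a₁ else if t = 1 then a₂ else if t = 2 then a₃ else b

/-- The infinite word `b a₁ a₂ a₃ b b b ⋯`. -/
def wordOdd {A : Type*} (a₁ a₂ a₃ b : A) : OTWFullShift A :=
  Sum.inl fun t =>
    if t = 0 then b else if t = 1 then a₁ else if t = 2 then a₂ else if t = 3 then a₃ else b

/-- The sequence `x^{2k} = a₁a₂a₃bbb⋯`, `x^{2k+1} = ba₁a₂a₃bbb⋯`. -/
def badOrbit {A : Type*} (a₁ a₂ a₃ b : A) : ℕ → OTWFullShift A :=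
  fun m => if m % 2 = 0 then wordEven a₁ a₂ a₃ b else wordOdd a₁ a₂ a₃ b

/-- If no word among `q_1, …, q_i` starts with `a₂` and the letter `b` does not
occur in any word among `q_1, …, q_i`, then the sequence
`x^{2k} = a₁a₂a₃bbb⋯`, `x^{2k+1} = ba₁a₂a₃bbb⋯` is a `2^{-i}`-pseudo-orbit for
`(Σ_A, σ, d_Q)` (all its points lying in the domain `D = Σ_A ∖ {∅}`). -/
theorem badOrbit_is_pseudo_orbit {A : Type*} [Countable A] [Infinite A]
    (Q : ℕ → List A) (hQ : IsEnumeration Q) (i : ℕ) (hi : 1 ≤ i)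
    (a₁ a₂ a₃ b : A)
    (hd : a₁ ≠ a₂ ∧ a₁ ≠ a₃ ∧ a₁ ≠ b ∧ a₂ ≠ a₃ ∧ a₂ ≠ b ∧ a₃ ≠ b)
    (hstart : ∀ k : ℕ, 1 ≤ k → k ≤ i → (Q k).head? ≠ some a₂)
    (hocc : ∀ k : ℕ, 1 ≤ k → k ≤ i → b ∉ Q k) :
    ∀ m : ℕ, badOrbit a₁ a₂ a₃ b m ∈ otwDomain A ∧
      otwDist Q (otwShift (badOrbit a₁ a₂ a₃ b m)) (badOrbit a₁ a₂ a₃ b (m + 1))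
        < (1 / 2 : ℝ) ^ i := by
  obtain ⟨-, -, -, -, h2b, -⟩ := hd
  intro m
  have hpos : (0 : ℝ) < (1 / 2 : ℝ) ^ i := by positivity
  have key : otwDist Q (otwShift (wordEven a₁ a₂ a₃ b)) (wordOdd a₁ a₂ a₃ b)
      < (1 / 2 : ℝ) ^ i := by
    unfold otwDist
    split_ifs with h
    · exact hpos
    · apply pow_lt_pow_right_of_lt_one₀ (by norm_num) (by norm_num)
      have hne : {j : ℕ | 1 ≤ j ∧ Xor' (OTWPre (Q j) (otwShift (wordEven a₁ a₂ a₃ b)))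
          (OTWPre (Q j) (wordOdd a₁ a₂ a₃ b))}.Nonempty := by
        obtain ⟨k, hk⟩ := hQ.2 [b]
        refine ⟨k + 1, by omega, ?_⟩
        have hk' : Q (k + 1) = [b] := hk
        rw [hk']
        right
        constructor
        · simp [OTWPre, wordOdd]
        · simp [OTWPre, wordEven, otwShift, h2b.symm]
      obtain ⟨h1, h3⟩ := Nat.sInf_mem hne
      by_contra hlt
      push Not at hlt
      have hs := hstart _ h1 hlt
      have ho := hocc _ h1 hlt
      revert h3 hs ho
      generalize Q _ = w
      intro h3 hs ho
      cases w with
      | nil => simp [OTWPre, Xor', wordEven, wordOdd, otwShift] at h3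
      | cons c w =>
        rcases h3 with ⟨h, -⟩ | ⟨h, -⟩
        · have := h ⟨0, by simp⟩
          simp at this
          exact hs (by simp [this])
        · have := h ⟨0, by simp⟩
          simp at this
          exact ho (by simp [this])
  rcases Nat.mod_two_eq_zero_or_one m with hm | hm
  · have hm' : (m + 1) % 2 = 1 := by omega
    simp only [badOrbit, hm, hm']
    exact ⟨by simp [otwDomain, wordEven], by simpa using key⟩
  · have hm' : (m + 1) % 2 = 0 := by omega
    have he : otwShift (wordOdd a₁ a₂ a₃ b) = wordEven a₁ a₂ a₃ b := by
      simp [otwShift, wordOdd, wordEven]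
    simp only [badOrbit, hm, hm']
    refine ⟨by simp [otwDomain, wordOdd], ?_⟩
    simp only [one_ne_zero, if_false, if_true, he, otwDist]
    exact hpos
end

section
/- Let A be a countably infinite set, Q an enumeration of Σ_A^fin, n ≥ 1, i > n an index, and a_1, a_2, a_3, b ∈ A pairwise distinct letters such that q_{i−n} = a_1 a_2 a_3. Define infinite words x^{2k} := a_1 a_2 a_3 b b b ⋯ and x^{2k+1} := b a_1 a_2 a_3 b b b ⋯ for all k ≥ 0. Then there is no x ∈ Σ_A such that d_Q(σ^m(x), x^m) < 2^{-(i−n)} for all m ≥ 0. -/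
theorem otwDist_lt_imp {A : Type*} (P : ℕ → List A) (x y : OTWFullShift A) (k : ℕ)
    (hk : 1 ≤ k) (h : otwDist P x y < (1 / 2 : ℝ) ^ k) (hy : OTWPre (P k) y) :
    OTWPre (P k) x := by
  by_contra hx
  have hne : x ≠ y := by
    rintro rfl
    exact hx hy
  unfold otwDist at h
  rw [if_neg hne] at h
  have hle : sInf {j : ℕ | 1 ≤ j ∧ Xor' (OTWPre (P j) x) (OTWPre (P j) y)} ≤ k :=
    Nat.sInf_le ⟨hk, Or.inr ⟨hy, hx⟩⟩
  exact absurd h (not_lt.mpr (pow_le_pow_of_le_one (by norm_num) (by norm_num) hle))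

/-- If `q_{i-n} = a₁a₂a₃` with `a₁, a₂, a₃, b` pairwise distinct and `i > n ≥ 1`,
then no point of `Σ_A` shadows the sequence `x^{2k} = a₁a₂a₃bbb⋯`,
`x^{2k+1} = ba₁a₂a₃bbb⋯` within `2^{-(i-n)}`. -/
theorem badOrbit_not_shadowed {A : Type*} [Countable A] [Infinite A]
    (Q : ℕ → List A) (hQ : IsEnumeration Q) (n : ℕ) (hn : 1 ≤ n)
    (i : ℕ) (hi : n < i) (a₁ a₂ a₃ b : A)
    (hd : a₁ ≠ a₂ ∧ a₁ ≠ a₃ ∧ a₁ ≠ b ∧ a₂ ≠ a₃ ∧ a₂ ≠ b ∧ a₃ ≠ b)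
    (hq : Q (i - n) = [a₁, a₂, a₃]) :
    ¬ ∃ x : OTWFullShift A, ∀ m : ℕ,
      otwDist Q (otwShift^[m] x) (badOrbit a₁ a₂ a₃ b m) < (1 / 2 : ℝ) ^ (i - n) := by
  rintro ⟨x, hx⟩
  have hw : OTWPre (Q (i - n)) (wordEven a₁ a₂ a₃ b) := by
    rw [hq]
    intro t
    fin_cases t <;> simp
  have h0 := otwDist_lt_imp Q _ _ (i - n) (by omega) (hx 0) (by simpa [badOrbit] using hw)
  have h2 := otwDist_lt_imp Q _ _ (i - n) (by omega) (hx 2) (by simpa [badOrbit] using hw)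
  rw [hq] at h0 h2
  rcases x with f | v
  · have e0 := h0 ⟨2, by simp⟩
    have e2 := h2 ⟨0, by simp⟩
    simp at e0 e2
    exact hd.2.1 (e2.trans e0.symm)
  · obtain ⟨r, rfl⟩ : [a₁, a₂, a₃] <+: v := h0
    have h2' : [a₁, a₂, a₃] <+: ([a₁, a₂, a₃] ++ r).tail.tail := h2
    simp at h2'
    exact hd.2.1 h2'.1
end

section
/- Let A be a countably infinite set. There exists a prefix–shift-compatible enumeration of Σ_A^fin, i.e. a bijection P : {1,2,3,…} → Σ_A^fin with p_1 = ∅ such that: (1) whenever p_k = uv with u ∈ Σ_A^fin and v a nonempty finite word, then u = p_m for some m < k; and (2) whenever |p_k| ≥ 2, then σ(p_k) = p_m for some m < k. -/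
/-- `P` is a prefix–shift-compatible enumeration: `p_1 = ∅`, every proper prefix
of `p_k` appears earlier, and the shifted word `σ(p_k)` appears earlier whenever
`|p_k| ≥ 2`. -/
def PrefixShiftCompatible {A : Type*} (P : ℕ → List A) : Prop :=
  P 1 = [] ∧
  (∀ k : ℕ, 1 ≤ k → ∀ u v : List A, P k = u ++ v → v ≠ [] →
    ∃ m : ℕ, 1 ≤ m ∧ m < k ∧ P m = u) ∧
  (∀ k : ℕ, 1 ≤ k → 2 ≤ (P k).length →
    ∃ m : ℕ, 1 ≤ m ∧ m < k ∧ P m = (P k).tail)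


/-- Binary coding of finite words. -/
def wcode {A : Type*} (f : A → ℕ) : List A → ℕ
  | [] => 0
  | a :: l => 2 ^ f a * (2 * wcode f l + 1)

theorem wcode_pair_inj : ∀ (a b m n : ℕ), 2 ^ a * (2 * m + 1) = 2 ^ b * (2 * n + 1) →
    a = b ∧ m = n
  | 0, 0, m, n, h => by simp at h; exact ⟨rfl, h⟩
  | 0, b + 1, m, n, h => by
      rw [pow_succ, mul_right_comm] at h; omega
  | a + 1, 0, m, n, h => by
      rw [pow_succ, mul_right_comm] at h; omega
  | a + 1, b + 1, m, n, h => by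
      rw [pow_succ, pow_succ, mul_right_comm, mul_right_comm (2 ^ b)] at h
      have := wcode_pair_inj a b m n (by omega)
      omega

theorem wcode_cons_pos {A : Type*} (f : A → ℕ) (a : A) (l : List A) :
    0 < wcode f (a :: l) := by
  simp only [wcode]; positivity

theorem wcode_inj {A : Type*} (f : A → ℕ) (hf : Function.Injective f) :
    Function.Injective (wcode f) := by
  intro l
  induction l with
  | nil =>
    intro l' h
    cases l' with
    | nil => rfl
    | cons b l' =>
      have := wcode_cons_pos f b l'
      rw [← h] at this
      simp [wcode] at this
  | cons a l ih =>
    intro l' h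
    cases l' with
    | nil =>
      have := wcode_cons_pos f a l
      rw [h] at this
      simp [wcode] at this
    | cons b l' =>
      obtain ⟨h1, h2⟩ := wcode_pair_inj _ _ _ _ h
      rw [hf h1, ih h2]

theorem wcode_tail_lt {A : Type*} (f : A → ℕ) (a : A) (l : List A) :
    wcode f l < wcode f (a :: l) := by
  have : 0 < 2 ^ f a := by positivity
  simp only [wcode]
  nlinarith

theorem wcode_surj {A : Type*} (f : A → ℕ) (hf : Function.Surjective f) :
    Function.Surjective (wcode f) := by
  intro n
  induction n using Nat.strong_induction_on with
  | _ n ih =>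
    rcases Nat.eq_zero_or_pos n with rfl | hn
    · exact ⟨[], rfl⟩
    · obtain ⟨k, m, ⟨r, rfl⟩, rfl⟩ := Nat.exists_eq_two_pow_mul_odd hn.ne'
      obtain ⟨a, rfl⟩ := hf k
      have : 0 < 2 ^ f a := by positivity
      obtain ⟨l, rfl⟩ := ih r (by nlinarith)
      exact ⟨a :: l, rfl⟩

theorem wcode_prefix_lt {A : Type*} (f : A → ℕ) (u v : List A) (hv : v ≠ []) :
    wcode f u < wcode f (u ++ v) := by
  induction u with
  | nil =>
    cases v with
    | nil => exact absurd rfl hv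
    | cons b l => exact wcode_cons_pos f b l
  | cons a u ih =>
    simp only [List.cons_append, wcode]
    gcongr

/-- There exists a prefix–shift-compatible enumeration of `Σ_A^fin`. -/
theorem exists_prefix_shift_compatible_enumeration
    {A : Type*} [Countable A] [Infinite A] :
    ∃ P : ℕ → List A, IsEnumeration P ∧ PrefixShiftCompatible P := by
  obtain ⟨f⟩ : Nonempty (A ≃ ℕ) := nonempty_equiv_of_countable
  let e : List A ≃ ℕ := Equiv.ofBijective (wcode f)
    ⟨wcode_inj f f.injective, wcode_surj f f.surjective⟩
  have he : ∀ l, e l = wcode f l := fun _ => rfl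
  refine ⟨fun k => e.symm (k - 1), ?_, ?_, ?_, ?_⟩
  · simpa [IsEnumeration] using e.symm.bijective
  · simp [Equiv.symm_apply_eq, he, wcode]
  · intro k hk u v h hv
    have h1 := wcode_prefix_lt f u v hv
    have h2 : k - 1 = wcode f (u ++ v) := by
      rw [← he]; exact (Equiv.symm_apply_eq e).1 h
    refine ⟨wcode f u + 1, by omega, by omega, ?_⟩
    simp [Equiv.symm_apply_eq, he]
  · intro k hk h
    dsimp only at h ⊢
    have h2 : k - 1 = wcode f (e.symm (k - 1)) := by
      rw [← he]; simp
    generalize e.symm (k - 1) = w at *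
    cases w with
    | nil => simp at h
    | cons a l =>
      have h1 := wcode_tail_lt f a l
      refine ⟨wcode f l + 1, by omega, by omega, ?_⟩
      simp [Equiv.symm_apply_eq, he]
end

section
/- Let A be a countably infinite set. There exist enumerations P and Q of Σ_A^fin such that the OTW metrics d_P and d_Q are uniformly equivalent, the Ott–Tomforde–Willis full shift (Σ_A, σ) with domain D = Σ_A ∖ {∅} has the Lipschitz shadowing property with respect to d_P, and it has the shadowing property but NOT the Lipschitz shadowing property with respect to d_Q. -/
namespace OTWaux

variable {A : Type*}

theorem pre_cons (x : OTWFullShift A) (hx : x ∈ otwDomain A) :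
    ∃ h : A, ∀ a t, OTWPre (a :: t) x ↔ a = h ∧ OTWPre t (otwShift x) := by
  rcases x with f | v
  · refine ⟨f 0, fun a t => ?_⟩
    simp only [OTWPre, otwShift]
    constructor
    · intro H
      refine ⟨by simpa using H ⟨0, by simp⟩, fun i => ?_⟩
      simpa using H i.succ
    · rintro ⟨h1, h2⟩ i
      refine Fin.cases ?_ (fun j => ?_) i
      · simpa using h1
      · simpa using h2 j
  · cases v with
    | nil => exact absurd rfl hx
    | cons b l =>
      refine ⟨b, fun a t => ?_⟩
      simp [OTWPre, otwShift, List.cons_prefix_cons]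

theorem pre_nil (x : OTWFullShift A) : OTWPre [] x := by
  rcases x with f | v
  · intro i; exact i.elim0
  · exact List.nil_prefix

theorem pre_map_range (f : ℕ → A) (n : ℕ) :
    OTWPre ((List.range n).map f) (Sum.inl f) := by
  intro i; simp

theorem sep (x y : OTWFullShift A) (H : ∀ u, OTWPre u x ↔ OTWPre u y) : x = y := by
  rcases x with f | v <;> rcases y with g | w
  · congr 1
    funext n
    have := (H _).1 (pre_map_range f (n + 1)) ⟨n, by simp⟩
    simpa using this
  · have h : _ <+: w := (H _).1 (pre_map_range f (w.length + 1))
    have := h.length_le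
    simp at this
  · have h : _ <+: v := (H _).2 (pre_map_range g (v.length + 1))
    have := h.length_le
    simp at this
  · have h1 : v <+: w := (H v).1 List.prefix_rfl
    have h2 : w <+: v := (H w).2 List.prefix_rfl
    rw [h1.eq_of_length (le_antisymm h1.length_le h2.length_le)]

/-- enumeration from an equivalence -/
def en (E : List A ≃ ℕ) : ℕ → List A := fun j => E.symm (j - 1)

theorem en_isEnum (E : List A ≃ ℕ) : IsEnumeration (en E) := by
  have : (fun k : ℕ => en E (k + 1)) = E.symm := by
    funext k; simp [en]
  unfold IsEnumeration
  rw [this]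
  exact E.symm.bijective

theorem dist_lt (E : List A ≃ ℕ) (x y : OTWFullShift A) (m : ℕ) :
    otwDist (en E) x y < (1 / 2 : ℝ) ^ m ↔
      ∀ u, E u < m → (OTWPre u x ↔ OTWPre u y) := by
  unfold otwDist
  split_ifs with h
  · subst h
    simp
  · rw [pow_lt_pow_iff_right_of_lt_one₀ (by norm_num) (by norm_num)]
    set S := {j : ℕ | 1 ≤ j ∧ Xor' (OTWPre (en E j) x) (OTWPre (en E j) y)} with hS
    have key : ∀ u, ¬ (OTWPre u x ↔ OTWPre u y) → E u + 1 ∈ S := by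
      intro u hu
      refine ⟨by omega, ?_⟩
      simp only [en, Nat.add_sub_cancel, Equiv.symm_apply_apply]
      exact (xor_iff_not_iff _ _).2 hu
    have hne : S.Nonempty := by
      by_contra hS'
      apply h
      apply sep
      intro u
      by_contra hu
      exact hS' ⟨_, key u hu⟩
    constructor
    · intro hm u hu
      by_contra hc
      have := Nat.sInf_le (key u hc)
      omega
    · intro H
      by_contra hc
      obtain ⟨h1, h2⟩ := Nat.sInf_mem hne
      apply (xor_iff_not_iff _ _).1 h2
      apply H
      simp only [en, Equiv.apply_symm_apply]
      omega

theorem unif (E F : List A ≃ ℕ) : ∀ ε > (0:ℝ), ∃ δ > (0:ℝ), ∀ x y : OTWFullShift A,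
        otwDist (en E) x y < δ → otwDist (en F) x y < ε := by
  intro ε hε
  obtain ⟨m, hm⟩ := exists_pow_lt_of_lt_one hε (show (1 / 2 : ℝ) < 1 by norm_num)
  let m' := (Finset.range m).sup (fun k => E (F.symm k) + 1)
  refine ⟨(1 / 2 : ℝ) ^ m', by positivity, fun x y hxy => lt_trans ?_ hm⟩
  rw [dist_lt] at hxy ⊢
  intro u hu
  apply hxy
  have := Finset.le_sup (f := fun k => E (F.symm k) + 1) (Finset.mem_range.2 hu)
  simp only [Equiv.symm_apply_apply] at this
  exact this

theorem iter_inl (h : ℕ → A) (n : ℕ) :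
    otwShift^[n] (Sum.inl h) = Sum.inl (fun k => h (k + n)) := by
  induction n with
  | zero => rfl
  | succ n ih =>
    rw [Function.iterate_succ_apply', ih]
    simp only [otwShift]
    congr 1
    funext k
    congr 1
    omega

theorem shadow (T : Set (List A)) (hT : ∀ a t, a :: t ∈ T → t ∈ T)
    (xs : ℕ → OTWFullShift A) (hD : ∀ n, xs n ∈ otwDomain A)
    (hp : ∀ n, ∀ u ∈ T, (OTWPre u (otwShift (xs n)) ↔ OTWPre u (xs (n + 1)))) :
    ∃ x : OTWFullShift A, (∀ j, otwShift^[j] x ∈ otwDomain A) ∧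
      ∀ n, ∀ u ∈ T, (OTWPre u (otwShift^[n] x) ↔ OTWPre u (xs n)) := by
  choose h hh using fun n => pre_cons (xs n) (hD n)
  have hdom : ∀ j, otwShift^[j] (Sum.inl h : OTWFullShift A) ∈ otwDomain A := by
    intro j
    rw [iter_inl]
    simp [otwDomain]
  refine ⟨Sum.inl h, hdom, ?_⟩
  intro n u
  induction u generalizing n with
  | nil => intro _; simp [pre_nil]
  | cons a t ih =>
    intro hu
    have ht := hT a t hu
    rw [hh n, hp n t ht, ← ih (n + 1) ht, Function.iterate_succ_apply']
    have e : ∀ x : ℕ → A, OTWPre (a :: t) (Sum.inl x) ↔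
        a = x 0 ∧ OTWPre t (otwShift (Sum.inl x)) := by
      intro x
      obtain ⟨b, hb⟩ := pre_cons (Sum.inl x : OTWFullShift A) (by simp [otwDomain])
      have : x 0 = b := ((hb (x 0) []).1 (by intro i; simp)).1
      rw [hb, this]
    rw [iter_inl, e]
    simp

theorem lip (E : List A ≃ ℕ) (hE : ∀ a t, E t < E (a :: t)) :
    HasLipschitzShadowing (otwDist (en E)) otwShift (otwDomain A) := by
  refine ⟨2, by norm_num, 1, by norm_num, fun δ h0 h1 xs hxs => ?_⟩
  obtain ⟨m, hm1, hm2⟩ := exists_nat_pow_near_of_lt_one h0 h1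
    (show (0:ℝ) < 1 / 2 by norm_num) (show (1 / 2 : ℝ) < 1 by norm_num)
  obtain ⟨x, hx, hx'⟩ := shadow {u | E u < m} (fun a t h => (hE a t).trans h) xs
    (fun n => (hxs n).1)
    (fun n u hu => (dist_lt E _ _ m).1 ((hxs n).2.trans_le hm2) u hu)
  refine ⟨x, hx, fun n => ?_⟩
  have := (dist_lt E _ _ m).2 (hx' n)
  rw [pow_succ] at hm1
  linarith

theorem lip_shadow (d : OTWFullShift A → OTWFullShift A → ℝ)
    (h : HasLipschitzShadowing d otwShift (otwDomain A)) :
    HasShadowing d otwShift (otwDomain A) := by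
  obtain ⟨L, hL, δ₀, hδ, H⟩ := h
  intro ε hε
  refine ⟨min δ₀ (ε / (2 * L)), by positivity, fun xs hxs => ?_⟩
  obtain ⟨x, hx, hx'⟩ := H _ (by positivity) (min_le_left _ _) xs hxs
  refine ⟨x, hx, fun n => (hx' n).trans_lt ?_⟩
  calc L * min δ₀ (ε / (2 * L)) ≤ L * (ε / (2 * L)) := by gcongr; exact min_le_right _ _
    _ = ε / 2 := by field_simp
    _ < ε := by linarith

theorem notlip (E : List A ≃ ℕ)
    (hE : ∀ C : ℕ, ∃ (m : ℕ) (a b : A), a ≠ b ∧ E [a] < m ∧ E [a, b, a] < m ∧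
      ∀ t, m + C ≤ E (b :: t)) :
    ¬ HasLipschitzShadowing (otwDist (en E)) otwShift (otwDomain A) := by
  rintro ⟨L, hL, δ₀, hδ, H⟩
  obtain ⟨C, hC⟩ := exists_pow_lt_of_lt_one (show 0 < min δ₀ (1 / L) by positivity)
    (show (1 / 2 : ℝ) < 1 by norm_num)
  obtain ⟨m, a, b, hab, h1, h2, h3⟩ := hE C
  have hpm : (0:ℝ) < (1 / 2 : ℝ) ^ m := by positivity
  have hpm1 : (1 / 2 : ℝ) ^ m ≤ 1 := pow_le_one₀ (by norm_num) (by norm_num)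
  have hpC : (0:ℝ) < (1 / 2 : ℝ) ^ C := by positivity
  have hC1 : (1 / 2 : ℝ) ^ C < δ₀ := hC.trans_le (min_le_left _ _)
  have hC2 : L * (1 / 2 : ℝ) ^ C < 1 := by
    have := hC.trans_le (min_le_right _ _)
    rw [lt_div_iff₀ hL] at this
    linarith
  let bb : OTWFullShift A := Sum.inl fun _ => b
  let xs : ℕ → OTWFullShift A := fun n => if n = 0 then Sum.inr [a, b, a] else bb
  have hbb : ∀ c t, OTWPre (c :: t) bb → c = b := by
    intro c t h
    simpa using h ⟨0, by simp⟩
  obtain ⟨x, hx, hx'⟩ := H ((1 / 2 : ℝ) ^ (m + C)) (by positivity)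
    (by rw [pow_add]; nlinarith) xs (by
      intro n
      refine ⟨?_, ?_⟩
      · simp only [xs, otwDomain]
        split_ifs <;> simp [bb]
      · rw [dist_lt]
        intro u hu
        by_cases hn : n = 0
        · subst hn
          simp only [xs, otwShift]
          cases u with
          | nil => simp [pre_nil]
          | cons c t =>
            have hc : c ≠ b := by
              rintro rfl
              have := h3 t
              omega
            constructor
            · intro h
              have h' : c :: t <+: [b, a] := h
              rw [List.cons_prefix_cons] at h'
              exact absurd h'.1 hc
            · intro h
              exact absurd (hbb c t h) hc
        · simp [xs, hn, otwShift, bb])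
  have hag : ∀ n u, E u < m → (OTWPre u (otwShift^[n] x) ↔ OTWPre u (xs n)) := by
    intro n
    rw [← dist_lt]
    refine (hx' n).trans_lt ?_
    rw [pow_add]
    nlinarith
  have q0 : OTWPre [a, b, a] x := (hag 0 _ h2).2 (show [a, b, a] <+: [a, b, a] from List.prefix_rfl)
  obtain ⟨_, k0⟩ := pre_cons x (hx 0)
  obtain ⟨_, k1⟩ := pre_cons (otwShift x) (hx 1)
  have q2 : OTWPre [a] (otwShift^[2] x) := ((k1 _ _).1 ((k0 _ _).1 q0).2).2
  have := (hag 2 _ h1).1 q2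
  exact hab (hbb a [] this)

/-- the swap of `[0, b+2, 0]` and `[b+1]` -/
def phi : List ℕ → List ℕ
  | [b + 1] => [0, b + 2, 0]
  | [0, b + 2, 0] => [b + 1]
  | l => l

theorem phi_phi : Function.Involutive phi := by
  intro l
  by_cases h1 : ∃ b, l = [b + 1]
  · obtain ⟨b, rfl⟩ := h1
    rfl
  by_cases h2 : ∃ b, l = [0, b + 2, 0]
  · obtain ⟨b, rfl⟩ := h2
    rfl
  have h : phi l = l := by
    unfold phi
    split
    · exact absurd ⟨_, rfl⟩ h1
    · exact absurd ⟨_, rfl⟩ h2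
    · rfl
  rw [h, h]

def ph : List ℕ ≃ List ℕ := phi_phi.toPerm

open Encodable in
theorem enc_cons (a : ℕ) (t : List ℕ) : encode (a :: t) = Nat.pair a (encode t) + 1 := by
  simp [Encodable.encode_list_cons]

theorem pair_ge (a b : ℕ) : a * a + a ≤ Nat.pair a b := by
  unfold Nat.pair
  split_ifs with h
  · nlinarith
  · omega

open Encodable in
theorem phi_ge (b : ℕ) (t : List ℕ) :
    (b + 2) * (b + 2) + (b + 2) + 1 ≤ encode (phi ((b + 2) :: t)) := by
  cases t with
  | nil =>
    simp only [phi, enc_cons]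
    have h1 := pair_ge (b + 1 + 2) (Nat.pair 0 (encode ([] : List ℕ)) + 1)
    have h2 := Nat.right_le_pair 0 (Nat.pair (b + 1 + 2) (Nat.pair 0 (encode ([] : List ℕ)) + 1) + 1)
    nlinarith
  | cons c s =>
    have : phi ((b + 2) :: c :: s) = (b + 2) :: c :: s := by simp [phi]
    rw [this, enc_cons]
    have := pair_ge (b + 2) (encode (c :: s))
    omega

end OTWaux

open OTWaux in
theorem otw_lipschitz_shadowing_metric_dependent
    {A : Type*} [Countable A] [Infinite A] :
    ∃ P Q : ℕ → List A, IsEnumeration P ∧ IsEnumeration Q ∧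
      (∀ ε > (0:ℝ), ∃ δ > (0:ℝ), ∀ x y : OTWFullShift A,
        otwDist P x y < δ → otwDist Q x y < ε) ∧
      (∀ ε > (0:ℝ), ∃ δ > (0:ℝ), ∀ x y : OTWFullShift A,
        otwDist Q x y < δ → otwDist P x y < ε) ∧
      HasLipschitzShadowing (otwDist P) otwShift (otwDomain A) ∧
      HasShadowing (otwDist Q) otwShift (otwDomain A) ∧
      ¬ HasLipschitzShadowing (otwDist Q) otwShift (otwDomain A) := by
  obtain ⟨_⟩ := nonempty_denumerable A
  let e : A ≃ ℕ := Denumerable.eqv A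
  let E : List A ≃ ℕ := (Equiv.listEquivOfEquiv e).trans (Denumerable.eqv (List ℕ))
  let F : List A ≃ ℕ :=
    ((Equiv.listEquivOfEquiv e).trans ph).trans (Denumerable.eqv (List ℕ))
  have hE : ∀ l, E l = Encodable.encode (l.map e) := fun l => rfl
  have hF : ∀ l, F l = Encodable.encode (phi (l.map e)) := fun l => rfl
  have hlip : HasLipschitzShadowing (otwDist (en E)) otwShift (otwDomain A) := by
    apply lip
    intro a t
    rw [hE, hE, List.map_cons, enc_cons]
    have := Nat.right_le_pair (e a) (Encodable.encode (t.map e))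
    omega
  refine ⟨en E, en F, en_isEnum E, en_isEnum F, unif E F, unif F E, hlip, ?_, ?_⟩
  · intro ε hε
    obtain ⟨ε', hε', h1⟩ := unif E F ε hε
    obtain ⟨δ', hδ', h2⟩ := lip_shadow _ hlip ε' hε'
    obtain ⟨δ, hδ, h3⟩ := unif F E δ' hδ'
    refine ⟨δ, hδ, fun xs hxs => ?_⟩
    obtain ⟨x, hx, hx'⟩ := h2 xs (fun n => ⟨(hxs n).1, h3 _ _ (hxs n).2⟩)
    exact ⟨x, hx, fun i => h1 _ _ (hx' i)⟩
  · apply notlip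
    intro C
    refine ⟨(C + 1) * (C + 1) + (C + 1) + 2, e.symm 0, e.symm (C + 2), ?_, ?_, ?_, ?_⟩
    · simp
    · rw [hF]
      simp only [List.map_cons, List.map_nil, Equiv.apply_symm_apply, phi, enc_cons]
      simp [Nat.pair]
    · rw [hF]
      simp only [List.map_cons, List.map_nil, Equiv.apply_symm_apply, phi, enc_cons]
      simp [Nat.pair]
    · intro t
      rw [hF]
      simp only [List.map_cons, Equiv.apply_symm_apply]
      have := phi_ge C (t.map e)
      nlinarith
end
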